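/- arXiv:1802.02499 — 4 statements merged into one kernel-verified Lean document; each statement's English description precedes it below -/
import Mathlib

section
/- Let (X,d,I) be a coarse interval space with parameters (φ,ψ), and set h(R₁,R₂) = ψ(R₂) + ψ(φ(R₁ + φ(R₂))). If b ∈ N_{R₁}([a,c]) and c ∈ N_{R₂}([a,d]), then c ∈ N_{h(R₁,R₂)}([b,d]). -/
/-- The interval `[a,b]` associated to a ternary operator `μ`. -/
def cmInterval {X : Type*} (μ : X → X → X → X) (a b : X) : Set X :=
  {c | ∃ x, c = μ a x b}

/-- The closed `R`-neighbourhood of a set `A`. -/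
def cmNbhd {X : Type*} [MetricSpace X] (R : ℝ) (A : Set X) : Set X :=
  {x | ∃ a ∈ A, dist x a ≤ R}

/-- A coarse interval space with parameters `(φ, ψ)`. -/
structure IsCoarseIntervalSpace {X : Type*} [MetricSpace X]
    (I : X → X → Set X) (φ ψ : ℝ → ℝ) : Prop where
  I1a : ∀ a : X, I a a = {a}
  I1b : ∀ a b : X, I a b = I b a
  φ_mono : Monotone φ
  I2 : ∀ (R : ℝ) (a b c : X), c ∈ cmNbhd R (I a b) →
    I a c ⊆ cmNbhd (φ R) (I a b)
  ψ_mono : Monotone ψ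
  I3ne : ∀ a b c : X, (I a b ∩ I b c ∩ I c a).Nonempty
  I3diam : ∀ (R : ℝ) (a b c x y : X),
    x ∈ cmNbhd R (I a b) ∩ cmNbhd R (I b c) ∩ cmNbhd R (I c a) →
    y ∈ cmNbhd R (I a b) ∩ cmNbhd R (I b c) ∩ cmNbhd R (I c a) →
    dist x y ≤ ψ R

/-- An induced (ternary) operator of an interval map `I` : for all `a b c`,
`μ a b c` lies in `[a,b] ∩ [b,c] ∩ [c,a]` and is invariant under permutations. -/
def IsInducedOperator {X : Type*} (I : X → X → Set X) (μ : X → X → X → X) : Prop :=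
  (∀ a b c : X, μ a b c ∈ I a b ∩ I b c ∩ I c a) ∧
  (∀ a b c : X, μ a b c = μ a c b) ∧
  (∀ a b c : X, μ a b c = μ b a c)

/-!
Let `n` be a median of `a, c, d` and `m` a median of `b, c, d`. Since `c` lies `R₂`-close to
`[a,d]`, it is itself an `R₂`-coarse median of `a, c, d`, so it is `ψ R₂`-close to `n`. Since `b`
lies `(R₁ + φ R₂)`-close to both `[a,c]` and `[a,d]`, axiom (I2) makes `m` a
`φ (R₁ + φ R₂)`-coarse median of `a, c, d`, hence it is also close to `n`. As `m ∈ [b,d]`, the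
triangle inequality along `c, n, m` finishes the proof.
-/

section Neighbourhoods

variable {X : Type*} [MetricSpace X] {R S : ℝ} {A B : Set X} {x : X}

theorem nonneg_of_mem_cmNbhd (hx : x ∈ cmNbhd R A) : 0 ≤ R := by
  obtain ⟨_, _, hdist⟩ := hx
  exact dist_nonneg.trans hdist

theorem subset_cmNbhd (hR : 0 ≤ R) : A ⊆ cmNbhd R A :=
  fun x hx ↦ ⟨x, hx, (dist_self x).trans_le hR⟩

theorem cmNbhd_subset_cmNbhd_of_le (hRS : R ≤ S) : cmNbhd R A ⊆ cmNbhd S A :=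
  fun _ ⟨y, hy, hxy⟩ ↦ ⟨y, hy, hxy.trans hRS⟩

theorem cmNbhd_subset_cmNbhd_add (hAB : A ⊆ cmNbhd S B) : cmNbhd R A ⊆ cmNbhd (R + S) B := by
  rintro x ⟨y, hy, hxy⟩
  obtain ⟨z, hz, hyz⟩ := hAB hy
  exact ⟨z, hz, (dist_triangle x y z).trans (add_le_add hxy hyz)⟩

end Neighbourhoods

/-- The medians of `a, b, c`: the points lying on all three sides of the triangle. -/
def cmMedians {X : Type*} (I : X → X → Set X) (a b c : X) : Set X :=
  I a b ∩ I b c ∩ I c a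

/-- The `R`-coarse medians of `a, b, c`: the points lying within distance `R` of each side of the
triangle. Axiom (I3) bounds the diameter of this set. -/
def cmCoarseMedians {X : Type*} [MetricSpace X] (I : X → X → Set X) (R : ℝ) (a b c : X) : Set X :=
  cmNbhd R (I a b) ∩ cmNbhd R (I b c) ∩ cmNbhd R (I c a)

theorem cmMedians_subset_cmCoarseMedians {X : Type*} [MetricSpace X] {I : X → X → Set X} {R : ℝ}
    {a b c : X} (hR : 0 ≤ R) : cmMedians I a b c ⊆ cmCoarseMedians I R a b c :=
  Set.inter_subset_inter (Set.inter_subset_inter (subset_cmNbhd hR) (subset_cmNbhd hR))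
    (subset_cmNbhd hR)

namespace IsCoarseIntervalSpace

variable {X : Type*} [MetricSpace X] {I : X → X → Set X} {φ ψ : ℝ → ℝ} {R R₁ R₂ : ℝ}
  {a a' b c d x y : X}

theorem left_mem (hI : IsCoarseIntervalSpace I φ ψ) (a b : X) : a ∈ I a b := by
  obtain ⟨z, ⟨hz, hzab⟩, _⟩ := hI.I3ne a a b
  rw [hI.I1a, Set.mem_singleton_iff] at hz
  rwa [hz] at hzab

theorem right_mem (hI : IsCoarseIntervalSpace I φ ψ) (a b : X) : b ∈ I a b :=
  hI.I1b b a ▸ hI.left_mem b a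

theorem φ_nonneg (hI : IsCoarseIntervalSpace I φ ψ) (a : X) (hR : 0 ≤ R) : 0 ≤ φ R :=
  nonneg_of_mem_cmNbhd <|
    hI.I2 R a a a (subset_cmNbhd hR (hI.left_mem a a)) (hI.left_mem a a)

theorem interval_right_subset_cmNbhd (hI : IsCoarseIntervalSpace I φ ψ)
    (hc : c ∈ cmNbhd R (I a b)) : I c b ⊆ cmNbhd (φ R) (I a b) := by
  rw [hI.I1b a b] at hc ⊢
  rw [hI.I1b c b]
  exact hI.I2 R b a c hc

theorem mem_cmNbhd_trans (hI : IsCoarseIntervalSpace I φ ψ)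
    (hb : b ∈ cmNbhd R₁ (I a c)) (hc : c ∈ cmNbhd R₂ (I a d)) :
    b ∈ cmNbhd (R₁ + φ R₂) (I a d) :=
  cmNbhd_subset_cmNbhd_add (hI.I2 R₂ a d c hc) hb

theorem dist_le_of_mem_cmMedians (hI : IsCoarseIntervalSpace I φ ψ)
    (hx : x ∈ cmMedians I a b c) (hy : y ∈ cmCoarseMedians I R a b c) : dist x y ≤ ψ R :=
  have hR : 0 ≤ R := nonneg_of_mem_cmNbhd hy.2
  hI.I3diam R a b c x y (cmMedians_subset_cmCoarseMedians hR hx) hy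

theorem mem_cmCoarseMedians_of_mem_cmNbhd (hI : IsCoarseIntervalSpace I φ ψ)
    (hb : b ∈ cmNbhd R (I c a)) : b ∈ cmCoarseMedians I R a b c :=
  have hR : 0 ≤ R := nonneg_of_mem_cmNbhd hb
  ⟨⟨subset_cmNbhd hR (hI.right_mem a b), subset_cmNbhd hR (hI.left_mem b c)⟩, hb⟩

theorem cmMedians_subset_cmCoarseMedians_of_mem_cmNbhd (hI : IsCoarseIntervalSpace I φ ψ)
    (hab : a' ∈ cmNbhd R (I a b)) (hca : a' ∈ cmNbhd R (I c a)) :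
    cmMedians I a' b c ⊆ cmCoarseMedians I (φ R) a b c := by
  have hφ : 0 ≤ φ R := hI.φ_nonneg a (nonneg_of_mem_cmNbhd hab)
  exact Set.inter_subset_inter
    (Set.inter_subset_inter (hI.interval_right_subset_cmNbhd hab) (subset_cmNbhd hφ))
    (hI.I2 R c a a' hca)

end IsCoarseIntervalSpace

/-- in a coarse interval space with parameters `(φ, ψ)`, with
`h R₁ R₂ = ψ R₂ + ψ (φ (R₁ + φ R₂))`: if `b ∈ N_{R₁}([a,c])` and
`c ∈ N_{R₂}([a,d])`, then `c ∈ N_{h(R₁,R₂)}([b,d])`. -/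
theorem stmt2 {X : Type*} [MetricSpace X] (I : X → X → Set X) (φ ψ : ℝ → ℝ)
    (hI : IsCoarseIntervalSpace I φ ψ) :
    ∀ (R₁ R₂ : ℝ) (a b c d : X),
      b ∈ cmNbhd R₁ (I a c) → c ∈ cmNbhd R₂ (I a d) →
      c ∈ cmNbhd (ψ R₂ + ψ (φ (R₁ + φ R₂))) (I b d) := by
  intro R₁ R₂ a b c d hb hc
  have hφ : 0 ≤ φ R₂ := hI.φ_nonneg a (nonneg_of_mem_cmNbhd hc)
  have hb_ac : b ∈ cmNbhd (R₁ + φ R₂) (I a c) :=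
    cmNbhd_subset_cmNbhd_of_le (le_add_of_nonneg_right hφ) hb
  have hb_da : b ∈ cmNbhd (R₁ + φ R₂) (I d a) :=
    hI.I1b a d ▸ hI.mem_cmNbhd_trans hb hc
  have hc_med : c ∈ cmCoarseMedians I R₂ a c d :=
    hI.mem_cmCoarseMedians_of_mem_cmNbhd (hI.I1b a d ▸ hc)
  obtain ⟨n, hn⟩ : (cmMedians I a c d).Nonempty := hI.I3ne a c d
  obtain ⟨m, hm⟩ : (cmMedians I b c d).Nonempty := hI.I3ne b c d
  have hm_med : m ∈ cmCoarseMedians I (φ (R₁ + φ R₂)) a c d :=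
    hI.cmMedians_subset_cmCoarseMedians_of_mem_cmNbhd hb_ac hb_da hm
  refine ⟨m, hI.I1b d b ▸ hm.2, ?_⟩
  calc dist c m ≤ dist n c + dist n m := dist_triangle_left c m n
    _ ≤ ψ R₂ + ψ (φ (R₁ + φ R₂)) :=
      add_le_add (hI.dist_le_of_mem_cmMedians hn hc_med)
        (hI.dist_le_of_mem_cmMedians hn hm_med)
end

section
/- Let (X,d,μ) be a coarse median space and n ∈ ℕ. Then the following are equivalent: (Rank condition) for every λ > 0 there is a constant C(λ) > 0 such that for any a,b ∈ X and any e₁,…,e_{n+1} ∈ [a,b] with d(a, μ(e_i,a,e_j)) ≤ λ for all i ≠ j, one has min{d(a,e_i) : i = 1,…,n+1} ≤ C(λ); (Thin (n+1)-cubes condition) there exists a non-decreasing function φ such that for all x₁,…,x_{n+1}, p, q ∈ X, min{d(p, μ(x_i,p,q)) : i = 1,…,n+1} ≤ φ(max{d(p, μ(x_i,x_j,p)) : i ≠ j}). -/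
/-- A coarse median space: a metric space with a ternary operator satisfying
(M1), (M2), (C1) and (C2). -/
structure IsCoarseMedianSpace {X : Type*} [MetricSpace X] (μ : X → X → X → X)
    (ρ : ℝ → ℝ) (κ₄ : ℝ) : Prop where
  M1 : ∀ a b : X, μ a a b = a
  M2₁ : ∀ a b c : X, μ a b c = μ a c b
  M2₂ : ∀ a b c : X, μ a b c = μ b a c
  ρ_mono : Monotone ρ
  C1 : ∀ a a' b b' c c' : X,
    dist (μ a b c) (μ a' b' c') ≤ ρ (dist a a' + dist b b' + dist c c')
  C2 : ∀ a b c d : X, dist (μ (μ a b c) b d) (μ a b (μ c b d)) ≤ κ₄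

/-!
For a fixed base point `p`, the operation `a ∧ b := μ a p b` is commutative, idempotent, and, by
(C2), associative up to bounded error, with `p ∧ a = p`. Hence `(a ∧ c) ∧ (b ∧ c)` is uniformly
close to `(a ∧ b) ∧ c`, and so it is close to `p` as soon as `a ∧ b` is. Thus the projections
`μ (x i) p q` of the `x i` to `[p, q]` inherit the smallness of the pairwise medians, and the rank
condition applies to them. Conversely, a point of `[a, b]` is its own projection up to `κ₄`.
-/

/-- The rank condition for families of interval points indexed by `ι`; for `ι = Fin (n + 1)` it
characterises rank at most `n`. The minimum over `i` being at most `C` is encoded as `∃ i`. -/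
def CoarseRankCondition {X : Type*} [MetricSpace X] (μ : X → X → X → X) (ι : Type*) : Prop :=
  ∀ lam : ℝ, 0 < lam → ∃ C : ℝ, 0 < C ∧
    ∀ (a b : X) (e : ι → X),
      (∀ i, e i ∈ cmInterval μ a b) →
      (∀ i j, i ≠ j → dist a (μ (e i) a (e j)) ≤ lam) →
      ∃ i, dist a (e i) ≤ C

/-- The thin cubes condition for families indexed by `ι`; for `ι = Fin (n + 1)` it is the thin
`(n + 1)`-cubes condition. The maximum over pairs is encoded by an arbitrary upper bound `ξ ≥ 0`,
which also makes sense when there are no pairs or infinitely many. -/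
def ThinCubesCondition {X : Type*} [MetricSpace X] (μ : X → X → X → X) (ι : Type*) : Prop :=
  ∃ φ : ℝ → ℝ, Monotone φ ∧ ∀ (x : ι → X) (p q : X) (ξ : ℝ),
    0 ≤ ξ → (∀ i j, i ≠ j → dist p (μ (x i) (x j) p) ≤ ξ) →
    ∃ i, dist p (μ (x i) p q) ≤ φ ξ

theorem exists_monotone_forall_of_antitone_of_monotone {α β : Type*} [Semiring α] [LinearOrder α]
    [FloorSemiring α] [SemilatticeSup β] {P : α → β → Prop} (hanti : ∀ b, Antitone (P · b))
    (hmono : ∀ a, Monotone (P a)) (hP : ∀ a, ∃ b, P a b) :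
    ∃ φ : α → β, Monotone φ ∧ ∀ a, P a (φ a) := by
  choose f hf using hP
  let g : ℕ → β := fun k => f k
  exact ⟨fun a => partialSups g ⌈a⌉₊, (partialSups g).monotone.comp Nat.ceil_mono,
    fun a => hanti _ (Nat.le_ceil a) (hmono _ (le_partialSups g _) (hf _))⟩

namespace IsCoarseMedianSpace

variable {X : Type*} [MetricSpace X] {μ : X → X → X → X} {ρ : ℝ → ℝ} {κ₄ : ℝ}

theorem median_swap_outer (h : IsCoarseMedianSpace μ ρ κ₄) (a b c : X) : μ a b c = μ c b a := by
  rw [h.M2₁ a b c, h.M2₂ a c b, h.M2₁ c a b]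

theorem median_self_outer (h : IsCoarseMedianSpace μ ρ κ₄) (a b : X) : μ a b a = a := by
  rw [h.M2₁, h.M1]

theorem median_mem_cmInterval (h : IsCoarseMedianSpace μ ρ κ₄) (x a b : X) :
    μ x a b ∈ cmInterval μ a b :=
  ⟨x, h.M2₂ x a b⟩

theorem dist_median_le_of_mem_cmInterval (h : IsCoarseMedianSpace μ ρ κ₄) {a b e : X}
    (he : e ∈ cmInterval μ a b) : dist (μ e a b) e ≤ κ₄ := by
  obtain ⟨y, rfl⟩ := he
  simpa only [h.M2₂ a y b, h.median_self_outer] using h.C2 y a b b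

theorem dist_median_median_left_le (h : IsCoarseMedianSpace μ ρ κ₄) (a a' b c : X) :
    dist (μ a b c) (μ a' b c) ≤ ρ (dist a a') := by
  simpa only [dist_self, add_zero] using h.C1 a a' b b c c

theorem dist_median_median_right_le (h : IsCoarseMedianSpace μ ρ κ₄) (a b c c' : X) :
    dist (μ a b c) (μ a b c') ≤ ρ (dist c c') := by
  simpa only [dist_self, zero_add] using h.C1 a a b b c c'

theorem dist_median_base_le (h : IsCoarseMedianSpace μ ρ κ₄) (p a b : X) :
    dist p (μ a p b) ≤ ρ (dist p a) := by
  simpa only [h.M1] using h.dist_median_median_left_le p a p b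

theorem dist_median_distrib_le (h : IsCoarseMedianSpace μ ρ κ₄) (a b c p : X) :
    dist (μ (μ a p b) p c) (μ (μ a p c) p (μ b p c)) ≤ 2 * κ₄ + ρ κ₄ := by
  have assoc_left : dist (μ (μ a p b) p c) (μ a p (μ b p c)) ≤ κ₄ := h.C2 a p b c
  have absorb : dist (μ b p c) (μ c p (μ b p c)) ≤ κ₄ := by
    rw [dist_comm, h.median_swap_outer c p]
    exact h.dist_median_le_of_mem_cmInterval (h.median_mem_cmInterval b p c)
  have absorb_inner : dist (μ a p (μ b p c)) (μ a p (μ c p (μ b p c))) ≤ ρ κ₄ :=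
    (h.dist_median_median_right_le _ _ _ _).trans (h.ρ_mono absorb)
  have assoc_right : dist (μ a p (μ c p (μ b p c))) (μ (μ a p c) p (μ b p c)) ≤ κ₄ := by
    rw [dist_comm]
    exact h.C2 a p c (μ b p c)
  linarith [dist_triangle4 (μ (μ a p b) p c) (μ a p (μ b p c)) (μ a p (μ c p (μ b p c)))
    (μ (μ a p c) p (μ b p c))]

theorem dist_base_median_projections_le (h : IsCoarseMedianSpace μ ρ κ₄) (a b p q : X) :
    dist p (μ (μ a p q) p (μ b p q)) ≤ ρ (dist p (μ a b p)) + (2 * κ₄ + ρ κ₄) :=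
  calc dist p (μ (μ a p q) p (μ b p q))
    _ ≤ dist p (μ (μ a p b) p q) + dist (μ (μ a p b) p q) (μ (μ a p q) p (μ b p q)) :=
        dist_triangle _ _ _
    _ ≤ ρ (dist p (μ a p b)) + (2 * κ₄ + ρ κ₄) :=
        add_le_add (h.dist_median_base_le _ _ _) (h.dist_median_distrib_le _ _ _ _)
    _ = ρ (dist p (μ a b p)) + (2 * κ₄ + ρ κ₄) := by rw [h.M2₁ a b p]

variable {ι : Type*}

theorem exists_forall_exists_dist_projection_le (h : IsCoarseMedianSpace μ ρ κ₄)
    (hrank : CoarseRankCondition μ ι) (ξ : ℝ) :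
    ∃ B, ∀ (x : ι → X) (p q : X), (∀ i j, i ≠ j → dist p (μ (x i) (x j) p) ≤ ξ) →
      ∃ i, dist p (μ (x i) p q) ≤ B := by
  obtain ⟨C, -, hC⟩ := hrank (max 1 (ρ ξ + (2 * κ₄ + ρ κ₄))) (by positivity)
  refine ⟨C, fun x p q hx => hC p q (fun i => μ (x i) p q)
    (fun i => h.median_mem_cmInterval (x i) p q) fun i j hij => ?_⟩
  calc dist p (μ (μ (x i) p q) p (μ (x j) p q))
    _ ≤ ρ (dist p (μ (x i) (x j) p)) + (2 * κ₄ + ρ κ₄) :=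
        h.dist_base_median_projections_le _ _ _ _
    _ ≤ ρ ξ + (2 * κ₄ + ρ κ₄) := by gcongr; exact h.ρ_mono (hx i j hij)
    _ ≤ max 1 (ρ ξ + (2 * κ₄ + ρ κ₄)) := le_max_right _ _

theorem thinCubesCondition_of_coarseRankCondition (h : IsCoarseMedianSpace μ ρ κ₄)
    (hrank : CoarseRankCondition μ ι) : ThinCubesCondition μ ι := by
  obtain ⟨φ, φ_mono, hφ⟩ := exists_monotone_forall_of_antitone_of_monotone
    (fun _ _ _ hξ hB x p q hx => hB x p q fun i j hij => (hx i j hij).trans hξ)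
    (fun _ _ _ hB hbound x p q hx => (hbound x p q hx).imp fun _ hi => hi.trans hB)
    (h.exists_forall_exists_dist_projection_le hrank)
  exact ⟨φ, φ_mono, fun x p q ξ _ => hφ ξ x p q⟩

theorem coarseRankCondition_of_thinCubesCondition (h : IsCoarseMedianSpace μ ρ κ₄)
    (hthin : ThinCubesCondition μ ι) : CoarseRankCondition μ ι := by
  obtain ⟨φ, -, hφ⟩ := hthin
  intro lam hlam
  refine ⟨max 1 (φ lam + κ₄), by positivity, fun a b e he hsmall => ?_⟩
  obtain ⟨i, hi⟩ := hφ e a b lam hlam.le fun i j hij => by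
    rw [h.M2₁]
    exact hsmall i j hij
  refine ⟨i, le_max_of_le_right ?_⟩
  calc dist a (e i)
    _ ≤ dist a (μ (e i) a b) + dist (μ (e i) a b) (e i) := dist_triangle _ _ _
    _ ≤ φ lam + κ₄ := add_le_add hi (h.dist_median_le_of_mem_cmInterval (he i))

end IsCoarseMedianSpace

theorem stmt10_general {X : Type*} [MetricSpace X] {μ : X → X → X → X} {ρ : ℝ → ℝ} {κ₄ : ℝ}
    (h : IsCoarseMedianSpace μ ρ κ₄) (ι : Type*) :
    CoarseRankCondition μ ι ↔ ThinCubesCondition μ ι :=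
  ⟨h.thinCubesCondition_of_coarseRankCondition, h.coarseRankCondition_of_thinCubesCondition⟩

/-- for a coarse median space and `n ∈ ℕ`, the rank condition
(the paper's characterisation of rank at most `n`) is equivalent to the thin
`(n+1)`-cubes condition. -/
theorem stmt10 {X : Type*} [MetricSpace X] (μ : X → X → X → X)
    (ρ : ℝ → ℝ) (κ₄ : ℝ) (h : IsCoarseMedianSpace μ ρ κ₄) (n : ℕ) :
    -- Rank condition:
    (∀ lam : ℝ, 0 < lam → ∃ C : ℝ, 0 < C ∧
      ∀ (a b : X) (e : Fin (n + 1) → X),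
        (∀ i, e i ∈ cmInterval μ a b) →
        (∀ i j, i ≠ j → dist a (μ (e i) a (e j)) ≤ lam) →
        ∃ i, dist a (e i) ≤ C) ↔
    -- Thin (n+1)-cubes condition:
    (∃ φ : ℝ → ℝ, Monotone φ ∧ ∀ (x : Fin (n + 1) → X) (p q : X) (ξ : ℝ),
      0 ≤ ξ → (∀ i j, i ≠ j → dist p (μ (x i) (x j) p) ≤ ξ) →
      ∃ i, dist p (μ (x i) p q) ≤ φ ξ) :=
  stmt10_general h (Fin (n + 1))
end

section
/- Let (X,d,μ) be an (L,C)-quasi-geodesic coarse median space with bounded geometry. Then all intervals [a,b] are finite, and there exist constants C' > 0 and C'' > 0 such that for all a,b ∈ X: (i) for every finite chain a = x₀, x₁, …, x_n = b in X, d(a,b) ≤ C' · Σ_{i=1}^{n}(card [x_{i−1},x_i] − 1); and (ii) there exists a finite chain a = x₀, x₁, …, x_n = b with Σ_{i=1}^{n}(card [x_{i−1},x_i] − 1) < C'' · (d(a,b) + 1). Consequently the induced metric d_μ satisfies (1/C')·d(a,b) ≤ d_μ(a,b) < C''·d(a,b) + C'' for all a,b ∈ X, so d and d_μ are quasi-isometric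 via the identity map. -/
/-- The cost `Σ (card [x_{i-1}, x_i] − 1)` of a chain `x₀, x₁, …, x_n`. -/
noncomputable def chainCost {X : Type*} (μ : X → X → X → X) : List X → ℕ
  | [] => 0
  | [_] => 0
  | x :: y :: rest => ((cmInterval μ x y).ncard - 1) + chainCost μ (y :: rest)

/-- `l` is a chain from `a` to `b`: it starts at `a` and ends at `b`. -/
def IsChainFrom {X : Type*} (a b : X) (l : List X) : Prop :=
  l.head? = some a ∧ l.getLast? = some b

/-- All consecutive intervals along the chain `l` are finite. -/
def FiniteIntervalChain {X : Type*} (μ : X → X → X → X) (l : List X) : Prop :=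
  ∀ p ∈ l.zip l.tail, (cmInterval μ p.1 p.2).Finite

/-- The induced metric associated to a ternary operator: the minimum of
`Σ (card [x_{i-1}, x_i] − 1)` over all finite-interval chains from `a`
to `b`. -/
noncomputable def inducedDist {X : Type*} (μ : X → X → X → X) (a b : X) : ℕ :=
  sInf {m : ℕ | ∃ l : List X,
    IsChainFrom a b l ∧ FiniteIntervalChain μ l ∧ chainCost μ l = m}

/-!
Joining `a` to `b` by a discrete path and applying `μ a · b` pushes the path into the interval
`[a, b]` without moving its endpoints. Its steps stay bounded, and a bounded-step path without
repetitions in a finite set has fewer steps than the set has points, so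
`d(a, b) ≤ R · (card [a, b] − 1)`; summing along a chain gives the lower bound on `d_μ`.
Conversely `[x, y]` lies within bounded distance of `x = μ x z x` when `d(x, y)` is bounded, so by
bounded geometry each step of a discrete path has bounded cost.
-/

section Rips

variable {X Y : Type*} [PseudoMetricSpace X] [PseudoMetricSpace Y] {r R : ℝ} {a b : X}

/-- The Rips graph of `X` at scale `r`, in which two distinct points at distance at most `r` are
adjacent. Its walks are the discrete paths with steps of size at most `r`. -/
def ripsGraph (X : Type*) [PseudoMetricSpace X] (r : ℝ) : SimpleGraph X where
  Adj x y := x ≠ y ∧ dist x y ≤ r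
  symm := ⟨fun x y h => ⟨h.1.symm, dist_comm x y ▸ h.2⟩⟩
  loopless := ⟨fun _ h => h.1 rfl⟩

/-- A large-scale geodesic space: for some scale `r`, any two points `a`, `b` are joined by a
discrete path with steps of size at most `r` whose number of steps is at most a constant multiple
of `dist a b + 1`. -/
def IsLargeScaleGeodesic (X : Type*) [PseudoMetricSpace X] : Prop :=
  ∃ r A : ℝ, 0 ≤ A ∧ ∀ a b : X, ∃ w : (ripsGraph X r).Walk a b, w.length ≤ A * (dist a b + 1)

/-- Bounded geometry: all balls of a given radius are finite, of uniformly bounded cardinality. -/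
def HasBoundedGeometry (X : Type*) [PseudoMetricSpace X] : Prop :=
  ∀ r : ℝ, 0 < r → ∃ N : ℕ, ∀ x : X,
    (Metric.closedBall x r).Finite ∧ (Metric.closedBall x r).ncard ≤ N

theorem ripsGraph_adj : (ripsGraph X r).Adj a b ↔ a ≠ b ∧ dist a b ≤ r := .rfl

theorem ripsGraph_reachable_of_dist_le (h : dist a b ≤ r) : (ripsGraph X r).Reachable a b := by
  rcases eq_or_ne a b with rfl | hab
  · exact .rfl
  · exact (ripsGraph_adj.2 ⟨hab, h⟩).reachable

theorem ripsGraph_reachable_map {f : X → Y} (hf : ∀ x y, dist x y ≤ r → dist (f x) (f y) ≤ R)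
    (h : (ripsGraph X r).Reachable a b) : (ripsGraph Y R).Reachable (f a) (f b) := by
  obtain ⟨w⟩ := h
  induction w with
  | nil => exact .rfl
  | cons hadj _ ih =>
    exact (ripsGraph_reachable_of_dist_le (hf _ _ (ripsGraph_adj.1 hadj).2)).trans ih

theorem dist_le_mul_walk_length (w : (ripsGraph X r).Walk a b) : dist a b ≤ r * w.length := by
  induction w with
  | nil => simp
  | @cons u v w hadj p ih =>
    calc dist u w ≤ dist u v + dist v w := dist_triangle u v w
      _ ≤ r + r * p.length := add_le_add (ripsGraph_adj.1 hadj).2 ih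
      _ = r * (p.cons hadj).length := by rw [SimpleGraph.Walk.length_cons]; push_cast; ring

theorem dist_le_mul_card_sub_one_of_reachable [Finite X] (hr : 0 ≤ r)
    (h : (ripsGraph X r).Reachable a b) : dist a b ≤ r * (Nat.card X - 1 : ℕ) := by
  have := Fintype.ofFinite X
  obtain ⟨w, hw⟩ := h.exists_isPath
  have hlen : w.length ≤ Nat.card X - 1 := by
    rw [Nat.card_eq_fintype_card]
    exact Nat.le_sub_one_of_lt hw.length_lt
  exact (dist_le_mul_walk_length w).trans (by gcongr)

theorem exists_walk_length_le_of_dist_succ_le {p : ℕ → X} {n : ℕ}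
    (hp : ∀ i < n, dist (p i) (p (i + 1)) ≤ r) :
    ∃ w : (ripsGraph X r).Walk (p 0) (p n), w.length ≤ n := by
  induction n with
  | zero => exact ⟨.nil, le_rfl⟩
  | succ n ih =>
    obtain ⟨w, hw⟩ := ih fun i hi => hp i (hi.trans n.lt_succ_self)
    rcases eq_or_ne (p n) (p (n + 1)) with heq | hne
    · exact ⟨w.copy rfl heq, by rw [SimpleGraph.Walk.length_copy]; lia⟩
    · have hadj := ripsGraph_adj.2 ⟨hne, hp n n.lt_succ_self⟩
      exact ⟨w.concat hadj, by rw [SimpleGraph.Walk.length_concat]; lia⟩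

theorem exists_walk_length_le_ceil {γ : ℝ → X} {ℓ : ℝ} (hℓ : 0 ≤ ℓ)
    (hγ : ∀ s ∈ Set.Icc 0 ℓ, ∀ t ∈ Set.Icc 0 ℓ, |s - t| ≤ 1 → dist (γ s) (γ t) ≤ r) :
    ∃ w : (ripsGraph X r).Walk (γ 0) (γ ℓ), w.length ≤ ⌈ℓ⌉₊ := by
  let p : ℕ → X := fun i => γ (min i ℓ)
  have hmem (i : ℕ) : min (i : ℝ) ℓ ∈ Set.Icc 0 ℓ := ⟨le_min i.cast_nonneg hℓ, min_le_right _ _⟩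
  have hstep (i : ℕ) : dist (p i) (p (i + 1)) ≤ r :=
    hγ _ (hmem i) _ (hmem (i + 1)) ((abs_min_sub_min_le_max _ _ _ _).trans (by simp))
  have hzero : p 0 = γ 0 := by simp only [p, Nat.cast_zero, min_eq_left hℓ]
  have hceil : p ⌈ℓ⌉₊ = γ ℓ := by simp only [p, min_eq_right (Nat.le_ceil ℓ)]
  rw [← hzero, ← hceil]
  exact exists_walk_length_le_of_dist_succ_le fun i _ => hstep i

theorem isLargeScaleGeodesic_of_coarse_lipschitz_paths {L C : ℝ} (hL : 0 ≤ L)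
    (h : ∀ x y : X, ∃ γ : ℝ → X, γ 0 = x ∧ γ (dist x y) = y ∧
      ∀ s ∈ Set.Icc 0 (dist x y), ∀ t ∈ Set.Icc 0 (dist x y),
        dist (γ s) (γ t) ≤ L * |s - t| + C) :
    IsLargeScaleGeodesic X := by
  refine ⟨L + C, 1, zero_le_one, fun a b => ?_⟩
  obtain ⟨γ, h₀, h₁, hγ⟩ := h a b
  obtain ⟨w, hw⟩ := exists_walk_length_le_ceil (r := L + C) dist_nonneg fun s hs t ht hst =>
    (hγ s hs t ht).trans (by gcongr; exact mul_le_of_le_one_right hL hst)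
  refine ⟨w.copy h₀ h₁, ?_⟩
  calc ((w.copy h₀ h₁).length : ℝ) = w.length := by rw [SimpleGraph.Walk.length_copy]
    _ ≤ ⌈dist a b⌉₊ := mod_cast hw
    _ ≤ 1 * (dist a b + 1) := by rw [one_mul]; exact (Nat.ceil_lt_add_one dist_nonneg).le

end Rips

section Chains

variable {X : Type*} {μ : X → X → X → X} {a b : X}

theorem isChainFrom_pair (a b : X) : IsChainFrom a b [a, b] := ⟨rfl, rfl⟩

theorem isChainFrom_support {G : SimpleGraph X} (w : G.Walk a b) : IsChainFrom a b w.support :=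
  ⟨by rw [List.head?_eq_some_head w.support_ne_nil, w.head_support],
    by rw [List.getLast?_eq_some_getLast w.support_ne_nil, w.getLast_support]⟩

theorem chainCost_support_le {G : SimpleGraph X} {N : ℕ}
    (hN : ∀ x y, G.Adj x y → (cmInterval μ x y).ncard - 1 ≤ N) (w : G.Walk a b) :
    chainCost μ w.support ≤ N * w.length := by
  induction w with
  | nil => exact Nat.zero_le _
  | @cons u v _ hadj p ih =>
    have hcost : chainCost μ (p.cons hadj).support =
        ((cmInterval μ u v).ncard - 1) + chainCost μ p.support := by
      rw [SimpleGraph.Walk.support_cons, ← p.cons_tail_support, chainCost]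
    rw [hcost, SimpleGraph.Walk.length_cons, mul_add_one, add_comm]
    exact add_le_add ih (hN u v hadj)

theorem dist_le_mul_chainCost [PseudoMetricSpace X] {K : ℝ}
    (hK : ∀ x y : X, dist x y ≤ K * ((cmInterval μ x y).ncard - 1 : ℕ)) :
    ∀ {a b : X} {l : List X}, IsChainFrom a b l → dist a b ≤ K * chainCost μ l
  | _, _, [], ⟨hhead, _⟩ => by simp at hhead
  | a, b, [x], ⟨hhead, hlast⟩ => by
    obtain rfl : x = a := by simpa using hhead
    obtain rfl : x = b := by simpa using hlast
    simp [chainCost]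
  | a, b, x :: y :: l, ⟨hhead, hlast⟩ => by
    obtain rfl : x = a := by simpa using hhead
    have htail : IsChainFrom y b (y :: l) := ⟨rfl, List.getLast?_cons_cons ▸ hlast⟩
    calc dist x b ≤ dist x y + dist y b := dist_triangle x y b
      _ ≤ K * ((cmInterval μ x y).ncard - 1 : ℕ) + K * chainCost μ (y :: l) :=
        add_le_add (hK x y) (dist_le_mul_chainCost hK htail)
      _ = K * chainCost μ (x :: y :: l) := by rw [chainCost]; push_cast; ring

theorem inducedDist_le_chainCost (hfin : ∀ x y, (cmInterval μ x y).Finite) {l : List X}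
    (hl : IsChainFrom a b l) : inducedDist μ a b ≤ chainCost μ l :=
  Nat.sInf_le ⟨l, hl, fun _ _ => hfin _ _, rfl⟩

theorem exists_isChainFrom_chainCost_eq_inducedDist (hfin : ∀ x y, (cmInterval μ x y).Finite)
    (a b : X) : ∃ l, IsChainFrom a b l ∧ chainCost μ l = inducedDist μ a b := by
  obtain ⟨l, hl, -, hcost⟩ := Nat.sInf_mem (s := {m | ∃ l : List X,
    IsChainFrom a b l ∧ FiniteIntervalChain μ l ∧ chainCost μ l = m})
    ⟨_, [a, b], isChainFrom_pair a b, fun _ _ => hfin _ _, rfl⟩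
  exact ⟨l, hl, hcost⟩

end Chains

section MajorityOperations

variable {X : Type*} {μ : X → X → X → X}

/-- A majority operation: a ternary operation returning any argument that occurs at least twice. -/
structure IsMajority (μ : X → X → X → X) : Prop where
  left_mid : ∀ a b, μ a a b = a
  left_right : ∀ a b, μ a b a = a
  mid_right : ∀ a b, μ a b b = b

theorem IsMajority.left_mem_cmInterval (hμ : IsMajority μ) (a b : X) : a ∈ cmInterval μ a b :=
  ⟨a, (hμ.left_mid a b).symm⟩

theorem IsMajority.right_mem_cmInterval (hμ : IsMajority μ) (a b : X) : b ∈ cmInterval μ a b :=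
  ⟨b, (hμ.mid_right a b).symm⟩

variable [PseudoMetricSpace X] {D R : ℝ} {a b : X}

/-- The ternary operation `μ` moves by at most `R` when each argument moves by at most `D`. An
operation with such an `R` for every `D` is bornologous. -/
def IsControlled (μ : X → X → X → X) (D R : ℝ) : Prop :=
  ∀ a a' b b' c c', dist a a' ≤ D → dist b b' ≤ D → dist c c' ≤ D →
    dist (μ a b c) (μ a' b' c') ≤ R

theorem IsMajority.cmInterval_subset_closedBall (hμ : IsMajority μ) (hR : IsControlled μ D R)
    (hab : dist a b ≤ D) : cmInterval μ a b ⊆ Metric.closedBall a R := by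
  rintro _ ⟨x, rfl⟩
  have hD : 0 ≤ D := dist_nonneg.trans hab
  calc dist (μ a x b) a = dist (μ a x b) (μ a x a) := by rw [hμ.left_right]
    _ ≤ R := hR _ _ _ _ _ _ (by simpa) (by simpa) (by rwa [dist_comm])

theorem IsMajority.finite_cmInterval (hμ : IsMajority μ)
    (hctrl : ∀ D, ∃ R > 0, IsControlled μ D R) (hX : HasBoundedGeometry X) (a b : X) :
    (cmInterval μ a b).Finite := by
  obtain ⟨R, hR₀, hR⟩ := hctrl (dist a b)
  obtain ⟨N, hN⟩ := hX R hR₀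
  exact (hN a).1.subset (hμ.cmInterval_subset_closedBall hR le_rfl)

theorem IsMajority.exists_ncard_cmInterval_le (hμ : IsMajority μ)
    (hctrl : ∀ D, ∃ R > 0, IsControlled μ D R) (hX : HasBoundedGeometry X) (D : ℝ) :
    ∃ N : ℕ, ∀ a b : X, dist a b ≤ D → (cmInterval μ a b).ncard ≤ N := by
  obtain ⟨R, hR₀, hR⟩ := hctrl D
  obtain ⟨N, hN⟩ := hX R hR₀
  exact ⟨N, fun a b hab => (Set.ncard_le_ncard
    (hμ.cmInterval_subset_closedBall hR hab) (hN a).1).trans (hN a).2⟩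

theorem IsMajority.dist_le_mul_ncard_cmInterval_sub_one (hμ : IsMajority μ)
    (hR : IsControlled μ D R) (hR₀ : 0 ≤ R) (hfin : (cmInterval μ a b).Finite)
    (hab : (ripsGraph X D).Reachable a b) :
    dist a b ≤ R * ((cmInterval μ a b).ncard - 1 : ℕ) := by
  have := hfin.to_subtype
  let proj : X → cmInterval μ a b := fun x => ⟨μ a x b, x, rfl⟩
  have hproj (x y : X) (hxy : dist x y ≤ D) : dist (proj x) (proj y) ≤ R := by
    have hD : 0 ≤ D := dist_nonneg.trans hxy
    exact hR _ _ _ _ _ _ (by simpa) hxy (by simpa)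
  have hleft : proj a = ⟨a, hμ.left_mem_cmInterval a b⟩ := Subtype.ext (hμ.left_mid a b)
  have hright : proj b = ⟨b, hμ.right_mem_cmInterval a b⟩ := Subtype.ext (hμ.mid_right a b)
  have hreach := ripsGraph_reachable_map hproj hab
  rw [hleft, hright] at hreach
  rw [← Nat.card_coe_set_eq]
  exact dist_le_mul_card_sub_one_of_reachable hR₀ hreach

theorem IsMajority.exists_dist_le_mul_chainCost (hμ : IsMajority μ)
    (hctrl : ∀ D, ∃ R > 0, IsControlled μ D R) (hfin : ∀ a b, (cmInterval μ a b).Finite)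
    (hgeo : IsLargeScaleGeodesic X) :
    ∃ K : ℝ, 0 < K ∧ ∀ (a b : X) (l : List X), IsChainFrom a b l →
      dist a b ≤ K * chainCost μ l := by
  obtain ⟨r, _, -, hwalk⟩ := hgeo
  obtain ⟨R, hR₀, hR⟩ := hctrl r
  refine ⟨R, hR₀, fun a b l => dist_le_mul_chainCost fun x y => ?_⟩
  obtain ⟨w, -⟩ := hwalk x y
  exact hμ.dist_le_mul_ncard_cmInterval_sub_one hR hR₀.le (hfin x y) w.reachable

theorem exists_isChainFrom_chainCost_lt
    (hcard : ∀ D : ℝ, ∃ N : ℕ, ∀ a b : X, dist a b ≤ D → (cmInterval μ a b).ncard ≤ N)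
    (hgeo : IsLargeScaleGeodesic X) :
    ∃ K : ℝ, 0 < K ∧ ∀ a b : X, ∃ l : List X, IsChainFrom a b l ∧
      chainCost μ l < K * (dist a b + 1) := by
  obtain ⟨r, A, hA, hwalk⟩ := hgeo
  obtain ⟨N, hN⟩ := hcard r
  refine ⟨N * A + 1, by positivity, fun a b => ?_⟩
  obtain ⟨w, hw⟩ := hwalk a b
  have hcost : chainCost μ w.support ≤ N * w.length :=
    chainCost_support_le (G := ripsGraph X r)
      (fun x y hxy => (Nat.sub_le _ 1).trans (hN x y (ripsGraph_adj.1 hxy).2)) w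
  refine ⟨w.support, isChainFrom_support w, ?_⟩
  calc (chainCost μ w.support : ℝ) ≤ N * w.length := mod_cast hcost
    _ ≤ N * (A * (dist a b + 1)) := by gcongr
    _ < (N * A + 1) * (dist a b + 1) := by linarith [dist_nonneg (x := a) (y := b)]

end MajorityOperations

section CoarseMedian

variable {X : Type*} [MetricSpace X] {μ : X → X → X → X} {ρ : ℝ → ℝ} {κ₄ : ℝ}

theorem IsCoarseMedianSpace.isMajority (h : IsCoarseMedianSpace μ ρ κ₄) : IsMajority μ where
  left_mid := h.M1
  left_right a b := by rw [h.M2₁, h.M1]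
  mid_right a b := by rw [h.M2₂, h.M2₁, h.M1]

theorem IsCoarseMedianSpace.exists_isControlled (h : IsCoarseMedianSpace μ ρ κ₄) (D : ℝ) :
    ∃ R > 0, IsControlled μ D R := by
  refine ⟨max (ρ (D + D + D)) 1, by positivity, fun a a' b b' c c' ha hb hc => ?_⟩
  calc dist (μ a b c) (μ a' b' c') ≤ ρ (dist a a' + dist b b' + dist c c') := h.C1 ..
    _ ≤ ρ (D + D + D) := h.ρ_mono (by gcongr)
    _ ≤ max (ρ (D + D + D)) 1 := le_max_left _ _

end CoarseMedian

theorem stmt16_general {X : Type*} [PseudoMetricSpace X] {μ : X → X → X → X}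
    (hμ : IsMajority μ) (hctrl : ∀ D, ∃ R > 0, IsControlled μ D R)
    (hX : HasBoundedGeometry X) (hgeo : IsLargeScaleGeodesic X) :
    (∀ a b : X, (cmInterval μ a b).Finite) ∧
    ∃ C' : ℝ, 0 < C' ∧ ∃ C'' : ℝ, 0 < C'' ∧
      (∀ (a b : X) (l : List X), IsChainFrom a b l →
        dist a b ≤ C' * (chainCost μ l : ℝ)) ∧
      (∀ a b : X, ∃ l : List X, IsChainFrom a b l ∧
        (chainCost μ l : ℝ) < C'' * (dist a b + 1)) ∧
      (∀ a b : X, (1 / C') * dist a b ≤ (inducedDist μ a b : ℝ) ∧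
        (inducedDist μ a b : ℝ) < C'' * dist a b + C'') := by
  have hfin := hμ.finite_cmInterval hctrl hX
  obtain ⟨C', hC', hlower⟩ := hμ.exists_dist_le_mul_chainCost hctrl hfin hgeo
  obtain ⟨C'', hC'', hupper⟩ :=
    exists_isChainFrom_chainCost_lt (hμ.exists_ncard_cmInterval_le hctrl hX) hgeo
  refine ⟨hfin, C', hC', C'', hC'', hlower, hupper, fun a b => ⟨?_, ?_⟩⟩
  · obtain ⟨l, hl, hmin⟩ := exists_isChainFrom_chainCost_eq_inducedDist hfin a b
    rw [one_div, inv_mul_le_iff₀ hC', ← hmin]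
    exact hlower a b l hl
  · obtain ⟨l, hl, hcost⟩ := hupper a b
    calc (inducedDist μ a b : ℝ) ≤ chainCost μ l := mod_cast inducedDist_le_chainCost hfin hl
      _ < C'' * (dist a b + 1) := hcost
      _ = C'' * dist a b + C'' := by ring

/-- in an `(L,C)`-quasi-geodesic coarse median space of bounded
geometry, all intervals are finite, chain costs dominate the metric up to a
multiplicative constant `C'`, points are joined by chains of cost at most
`C''·(d(a,b)+1)`, and consequently the induced metric `d_μ` is quasi-isometric
to `d` via the identity map. -/
theorem stmt16 {X : Type*} [MetricSpace X] (μ : X → X → X → X)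
    (ρ : ℝ → ℝ) (κ₄ : ℝ) (h : IsCoarseMedianSpace μ ρ κ₄)
    -- bounded geometry:
    (hbg : ∀ r : ℝ, 0 < r → ∃ N : ℕ, ∀ x : X,
      (Metric.closedBall x r).Finite ∧ (Metric.closedBall x r).ncard ≤ N)
    -- (L,C)-quasi-geodesic:
    (L C : ℝ) (hL : 0 < L) (hC : 0 < C)
    (hqg : ∀ x y : X, ∃ γ : ℝ → X, γ 0 = x ∧ γ (dist x y) = y ∧
      ∀ s ∈ Set.Icc (0 : ℝ) (dist x y), ∀ t ∈ Set.Icc (0 : ℝ) (dist x y),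
        L⁻¹ * |s - t| - C ≤ dist (γ s) (γ t) ∧ dist (γ s) (γ t) ≤ L * |s - t| + C) :
    (∀ a b : X, (cmInterval μ a b).Finite) ∧
    ∃ C' : ℝ, 0 < C' ∧ ∃ C'' : ℝ, 0 < C'' ∧
      -- (i) every finite chain from a to b satisfies d(a,b) ≤ C' · (its cost):
      (∀ (a b : X) (l : List X), IsChainFrom a b l →
        dist a b ≤ C' * (chainCost μ l : ℝ)) ∧
      -- (ii) some chain from a to b has cost < C''·(d(a,b)+1):
      (∀ a b : X, ∃ l : List X, IsChainFrom a b l ∧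
        (chainCost μ l : ℝ) < C'' * (dist a b + 1)) ∧
      -- consequently d and d_μ are quasi-isometric via the identity:
      (∀ a b : X, (1 / C') * dist a b ≤ (inducedDist μ a b : ℝ) ∧
        (inducedDist μ a b : ℝ) < C'' * dist a b + C'') :=
  stmt16_general h.isMajority h.exists_isControlled hbg <|
    isLargeScaleGeodesic_of_coarse_lipschitz_paths hL.le fun x y =>
      (hqg x y).imp fun _ ⟨h₀, h₁, hγ⟩ => ⟨h₀, h₁, fun s hs t ht => (hγ s hs t ht).2⟩
end

section
/- Let (X,μ) be a ternary algebra of bounded valency. Then (X,μ) admits a metric d such that (X,d,μ) is a coarse median space of bounded geometry if and only if (X,μ) is a coarse median algebra, i.e. all intervals [a,b] are finite, μ satisfies (M1) μ(a,a,b) = a and (M2) μ(a,b,c) = μ(a,c,b) = μ(b,a,c), and (M3)' there is a constant K ≥ 0 such that the interval [μ(a,b,μ(c,d,e)), μ(μ(a,b,c),μ(a,b,d),e)] has cardinality at most K for all a,b,c,d,e ∈ X. -/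
/-- `D` is a metric (distance function) on `X`. -/
structure IsMetricD {X : Type*} (D : X → X → ℝ) : Prop where
  self : ∀ x, D x x = 0
  eq_of_dist_eq_zero : ∀ x y, D x y = 0 → x = y
  symm : ∀ x y, D x y = D y x
  triangle : ∀ x y z, D x z ≤ D x y + D y z

/-- `(X, D, μ)` is a coarse median space: `μ` satisfies (M1), (M2), (C1)
and (C2) with respect to the distance function `D`. -/
def IsCoarseMedianSpaceWith {X : Type*} (D : X → X → ℝ) (μ : X → X → X → X) : Prop :=
  (∀ a b : X, μ a a b = a) ∧
  (∀ a b c : X, μ a b c = μ a c b) ∧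
  (∀ a b c : X, μ a b c = μ b a c) ∧
  (∃ ρ : ℝ → ℝ, Monotone ρ ∧ ∀ a a' b b' c c' : X,
    D (μ a b c) (μ a' b' c') ≤ ρ (D a a' + D b b' + D c c')) ∧
  (∃ κ₄ : ℝ, 0 ≤ κ₄ ∧ ∀ a b c d : X,
    D (μ (μ a b c) b d) (μ a b (μ c b d)) ≤ κ₄)

/-- `D` has bounded geometry: balls of each radius have uniformly bounded
cardinality. -/
def BoundedGeometryWith {X : Type*} (D : X → X → ℝ) : Prop :=
  ∀ r : ℝ, 0 < r → ∃ N : ℕ, ∀ x : X,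
    {y : X | D x y ≤ r}.Finite ∧ {y : X | D x y ≤ r}.ncard ≤ N

/-- A ternary algebra has bounded valency if the number of points `y` whose
interval `[x,y]` has at most `R` points is uniformly bounded by `φ R`. -/
def BoundedValency {X : Type*} (μ : X → X → X → X) : Prop :=
  ∃ φ : ℕ → ℕ, ∀ (x : X) (R : ℕ),
    {y : X | (cmInterval μ x y).Finite ∧ (cmInterval μ x y).ncard ≤ R}.Finite ∧
    {y : X | (cmInterval μ x y).Finite ∧ (cmInterval μ x y).ncard ≤ R}.ncard ≤ φ R

/-!
For the forward direction the coarse identity (C2) becomes exact in the set of functions into `X`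
modulo bounded distance, where `μ` induces a median algebra. There the four-point identity implies
the five-point identity. Applying this to the coordinate functions on `X⁵` gives a uniform bound for
the distance between the two sides of the five-point identity; bounded geometry turns this distance
bound into a bound on the interval between them, as `[x,y]` lies in a ball about `x` whose radius is
controlled by the distance from `x` to `y`.

For the converse, weight each pair `x, y` by the cardinality of `[x,y]` and take the induced
chain metric. Bounded valency makes its balls uniformly finite. By (M3)', `[μ(y,b,c), μ(z,b,c)]` is
covered by boundedly many points for each point of `[y,z]`, so `μ(·,b,c)` is Lipschitz.
-/

section MedianAlgebra

variable {X : Type*}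

/-- A ternary operation satisfying (M1) and (M2): a majority operation that is invariant under
permutations of its arguments. -/
structure IsSymmMajority (m : X → X → X → X) : Prop where
  majority : ∀ a b, m a a b = a
  right_comm : ∀ a b c, m a b c = m a c b
  left_comm : ∀ a b c, m a b c = m b a c

/-- A median algebra, axiomatised by (M1), (M2) and the four-point identity, i.e. (C2) with
`κ₄ = 0`. -/
structure IsMedianAlgebra (m : X → X → X → X) : Prop extends IsSymmMajority m where
  four_point : ∀ a b c d, m (m a b c) b d = m a b (m c b d)

/-- Betweenness: `x` lies in the interval `[a,b]`. In a median algebra this fixed-point condition is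
equivalent to `x = m a y b` for some `y`. -/
def Between (m : X → X → X → X) (a x b : X) : Prop :=
  m a x b = x

namespace IsSymmMajority

variable {m : X → X → X → X} {a b c p q x : X}

theorem rotate (h : IsSymmMajority m) (a b c : X) : m a b c = m b c a := by
  rw [h.left_comm, h.right_comm]

theorem majority_right (h : IsSymmMajority m) (a b : X) : m a b b = b := by
  rw [h.rotate, h.majority]

theorem between_symm (h : IsSymmMajority m) (hx : Between m a x b) : Between m b x a := by
  rw [Between, h.rotate, h.left_comm]
  exact hx

theorem eq_of_between_self (h : IsSymmMajority m) (hx : Between m a x a) : x = a := by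
  rw [← hx, h.right_comm, h.majority]

theorem between_antisymm (h : IsSymmMajority m) (hp : Between m a p q) (hq : Between m a q p) :
    p = q := by
  rw [← hp, h.right_comm, hq]

end IsSymmMajority

namespace IsMedianAlgebra

variable {m : X → X → X → X} {a b c d p q w x y z : X}

theorem between_median₁₂ (h : IsMedianAlgebra m) (a b c : X) : Between m a (m a b c) b := by
  have key := h.four_point b a b c
  rw [h.right_comm b a b, h.majority] at key
  rw [Between, h.right_comm a _ b, h.left_comm a b c, h.left_comm a b, ← key]

theorem between_median₁₃ (h : IsMedianAlgebra m) (a b c : X) : Between m a (m a b c) c := by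
  rw [h.right_comm]
  exact h.between_median₁₂ a c b

theorem between_median₂₃ (h : IsMedianAlgebra m) (a b c : X) : Between m b (m a b c) c := by
  rw [h.left_comm]
  exact h.between_median₁₃ b a c

theorem between_trans_left (h : IsMedianAlgebra m) (hy : Between m w y z) (hx : Between m w x y) :
    Between m w x z := by
  have key := h.four_point x w y z
  rwa [h.left_comm x w y, hx, h.left_comm y w z, hy, h.left_comm x w y, hx, h.left_comm x w z]
    at key

theorem between_trans_left_right (h : IsMedianAlgebra m) (hy : Between m w y z)
    (hx : Between m w x y) : Between m x y z := by
  have key := h.four_point x y w z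
  rwa [hy, h.right_comm x y w, h.left_comm x w y, hx, h.majority_right] at key

theorem between_trans_right_left (h : IsMedianAlgebra m) (hx : Between m w x z)
    (hy : Between m x y z) : Between m w x y :=
  h.between_symm (h.between_trans_left_right (h.between_symm hx) (h.between_symm hy))

theorem between_median_of_between (h : IsMedianAlgebra m) (ha : Between m b z a)
    (hc : Between m b z c) : Between m b z (m a b c) := by
  have key := h.four_point z b a c
  rw [h.left_comm z b a, ha, h.left_comm z b c, hc, h.left_comm z b] at key
  exact key.symm

theorem eq_median_of_between (h : IsMedianAlgebra m) (hab : Between m a z b)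
    (hbc : Between m b z c) (hac : Between m a z c) : z = m a b c := by
  have hb : Between m b z (m a b c) := h.between_median_of_between (h.between_symm hab) hbc
  have ha : Between m a z (m a b c) := by
    rw [h.left_comm]
    exact h.between_median_of_between hab hac
  have hself := h.between_median_of_between (h.between_symm ha) (h.between_symm hb)
  rw [h.between_median₁₂ a b c] at hself
  exact h.eq_of_between_self hself

theorem median_eq_of_between (h : IsMedianAlgebra m) (hx : Between m a x b)
    (hq : Between m (m a b q) q x) : m a b q = q := by
  have hp := h.between_median₁₂ a b q
  have hpa := h.between_median₁₃ a b q
  have hpb := h.between_median₂₃ a b q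
  generalize m a b q = p at hq hp hpa hpb ⊢
  -- The auxiliary point `s` is chosen so that both `p ∈ [s,q]` and `q ∈ [s,p]`.
  obtain ⟨s, hs⟩ : ∃ s, s = m a p x := ⟨_, rfl⟩
  have hs_ap : Between m a s p := hs ▸ h.between_median₁₂ a p x
  have hs_ax : Between m a s x := hs ▸ h.between_median₁₃ a p x
  have hs_px : Between m p s x := hs ▸ h.between_median₂₃ a p x
  have hp_sq : Between m s p q := h.between_trans_left_right hpa hs_ap
  have hp_median : p = m q s b :=
    h.eq_median_of_between (h.between_symm hp_sq) (h.between_trans_left_right hp hs_ap)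
      (h.between_symm hpb)
  have hs_qx : Between m q s x := by
    obtain ⟨r, hr⟩ : ∃ r, r = m q s x := ⟨_, rfl⟩
    have hr_sq : Between m s r q := h.between_symm (hr ▸ h.between_median₁₂ q s x)
    have hr_sx : Between m s r x := hr ▸ h.between_median₂₃ q s x
    have hr_sb : Between m s r b :=
      h.between_trans_left (h.between_trans_left_right hx hs_ax) hr_sx
    have hr_sp : Between m s r p := by
      rw [hp_median]
      exact h.between_median_of_between hr_sq hr_sb
    have hr_ss := h.between_median_of_between hr_sp hr_sx
    rw [hs_px] at hr_ss
    exact hr.symm.trans (h.eq_of_between_self hr_ss)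
  have hq_sp : Between m s q p :=
    h.between_trans_left_right (h.between_symm hq) (h.between_symm hs_qx)
  exact h.between_antisymm hp_sq hq_sp

theorem between_gate (h : IsMedianAlgebra m) (w : X) (hx : Between m a x b) :
    Between m w (m a w b) x := by
  have hp_aw := h.between_median₁₂ a w b
  have hp_ab := h.between_median₁₃ a w b
  have hp_wb := h.between_median₂₃ a w b
  generalize m a w b = p at hp_aw hp_ab hp_wb ⊢
  obtain ⟨q, hq⟩ : ∃ q, q = m p w x := ⟨_, rfl⟩
  have hq_pw : Between m p q w := hq ▸ h.between_median₁₂ p w x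
  have hq_px : Between m p q x := hq ▸ h.between_median₁₃ p w x
  have hq_wx : Between m w q x := hq ▸ h.between_median₂₃ p w x
  have hp_median : p = m a b q :=
    h.eq_median_of_between hp_ab
      (h.between_trans_right_left (h.between_symm hp_wb) hq_pw)
      (h.between_trans_right_left hp_aw hq_pw)
  have hpq : p = q := by
    rw [hp_median] at hq_px ⊢
    exact h.median_eq_of_between hx hq_px
  rwa [hpq]

theorem between_convex (h : IsMedianAlgebra m) (hx : Between m a x b) (hy : Between m a y b)
    (hw : Between m x w y) : Between m a w b := by
  have hself := h.between_median_of_between (h.between_gate w hx) (h.between_gate w hy)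
  rw [hw] at hself
  exact h.eq_of_between_self hself

theorem between_median_median (h : IsMedianAlgebra m) (a b : X) (hz : Between m c z d) :
    Between m (m a c b) (m a z b) (m a d b) := by
  have gate_mem (k : X) : Between m a (m a k b) b := h.between_median₁₃ a k b
  have hp := gate_mem z
  obtain ⟨r, hr⟩ : ∃ r, r = m (m a c b) (m a z b) (m a d b) := ⟨_, rfl⟩
  have hr_cd : Between m (m a c b) r (m a d b) := hr ▸ h.between_median₁₃ _ _ _
  have hr_pc : Between m (m a z b) r (m a c b) :=
    h.between_symm (hr ▸ h.between_median₁₂ _ _ _)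
  have hr_pd : Between m (m a z b) r (m a d b) := hr ▸ h.between_median₂₃ _ _ _
  have hp_zr : Between m z (m a z b) r :=
    h.between_gate z (h.between_convex (gate_mem c) (gate_mem d) hr_cd)
  have hr_c : Between m (m a z b) r c :=
    h.between_trans_left (h.between_symm (h.between_gate c hp)) hr_pc
  have hr_d : Between m (m a z b) r d :=
    h.between_trans_left (h.between_symm (h.between_gate d hp)) hr_pd
  have hr_z : Between m (m a z b) r z :=
    h.between_trans_left (h.between_gate (m a z b) hz) (h.between_median_of_between hr_c hr_d)
  exact hr.symm.trans (h.between_antisymm (h.between_symm hr_z) hp_zr)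

theorem five_point (h : IsMedianAlgebra m) (a b c d e : X) :
    m a b (m c d e) = m (m a b c) (m a b d) e := by
  rw [h.right_comm a b (m c d e), h.right_comm a b c, h.right_comm a b d]
  apply h.eq_median_of_between
  · exact h.between_median_median a b (h.between_median₁₂ c d e)
  · exact h.between_trans_left (h.between_symm (h.between_gate e (h.between_median₁₃ a d b)))
      (h.between_median_median a b (h.between_median₂₃ c d e))
  · exact h.between_trans_left (h.between_symm (h.between_gate e (h.between_median₁₃ a c b)))
      (h.between_median_median a b (h.between_median₁₃ c d e))

end IsMedianAlgebra

end MedianAlgebra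

/-- (M3)' with constant `K`; an infinite interval has `ncard = 0`, so this is meaningful only when
intervals are finite. -/
def CoarseFivePoint {X : Type*} (μ : X → X → X → X) (K : ℕ) : Prop :=
  ∀ a b c d e, (cmInterval μ (μ a b (μ c d e)) (μ (μ a b c) (μ a b d) e)).ncard ≤ K

section CoarseMedianSpace

variable {X ι : Type*} {D : X → X → ℝ} {μ : X → X → X → X}

/-- Two functions `ι → X` are identified when they are at bounded distance; the quotient makes
coarse identities exact. -/
def boundedDistSetoid (hD : IsMetricD D) (ι : Type*) : Setoid (ι → X) where
  r f g := ∃ C : ℝ, ∀ i, D (f i) (g i) ≤ C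
  iseqv :=
    { refl := fun _ => ⟨0, fun _ => (hD.self _).le⟩
      symm := fun ⟨C, hC⟩ => ⟨C, fun i => (hD.symm _ _).trans_le (hC i)⟩
      trans := fun ⟨C, hC⟩ ⟨C', hC'⟩ =>
        ⟨C + C', fun i => (hD.triangle _ _ _).trans (add_le_add (hC i) (hC' i))⟩ }

/-- The operation induced by `μ` on functions modulo bounded distance, computed on chosen
representatives; (C1) makes it independent of the choice, see `boundedDistMedian_mk`. -/
noncomputable def boundedDistMedian (hD : IsMetricD D) (ι : Type*) (μ : X → X → X → X)
    (x y z : Quotient (boundedDistSetoid hD ι)) : Quotient (boundedDistSetoid hD ι) :=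
  Quotient.mk _ fun i => μ (x.out i) (y.out i) (z.out i)

theorem boundedDistMedian_mk (hD : IsMetricD D) {ρ : ℝ → ℝ} (hρ : Monotone ρ)
    (hμ : ∀ a a' b b' c c', D (μ a b c) (μ a' b' c') ≤ ρ (D a a' + D b b' + D c c'))
    (f g k : ι → X) :
    boundedDistMedian hD ι μ (Quotient.mk _ f) (Quotient.mk _ g) (Quotient.mk _ k) =
      Quotient.mk _ fun i => μ (f i) (g i) (k i) := by
  obtain ⟨Cf, hf⟩ := Quotient.mk_out (s := boundedDistSetoid hD ι) f
  obtain ⟨Cg, hg⟩ := Quotient.mk_out (s := boundedDistSetoid hD ι) g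
  obtain ⟨Ck, hk⟩ := Quotient.mk_out (s := boundedDistSetoid hD ι) k
  exact Quotient.sound ⟨ρ (Cf + Cg + Ck), fun i => (hμ _ _ _ _ _ _).trans
    (hρ (add_le_add (add_le_add (hf i) (hg i)) (hk i)))⟩

namespace IsCoarseMedianSpaceWith

theorem isSymmMajority (h : IsCoarseMedianSpaceWith D μ) : IsSymmMajority μ :=
  ⟨h.1, h.2.1, h.2.2.1⟩

theorem isMedianAlgebra_boundedDistMedian (h : IsCoarseMedianSpaceWith D μ) (hD : IsMetricD D)
    (ι : Type*) : IsMedianAlgebra (boundedDistMedian hD ι μ) := by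
  obtain ⟨hM1, hM2, hM2', ⟨ρ, hρ, hμ⟩, κ, -, hC2⟩ := h
  have mk := boundedDistMedian_mk (ι := ι) hD hρ hμ
  refine ⟨⟨?_, ?_, ?_⟩, ?_⟩
  · rintro ⟨a⟩ ⟨b⟩
    exact (mk a a b).trans (congrArg _ (funext fun i => hM1 _ _))
  · rintro ⟨a⟩ ⟨b⟩ ⟨c⟩
    exact (mk a b c).trans ((congrArg _ (funext fun i => hM2 _ _ _)).trans (mk a c b).symm)
  · rintro ⟨a⟩ ⟨b⟩ ⟨c⟩
    exact (mk a b c).trans ((congrArg _ (funext fun i => hM2' _ _ _)).trans (mk b a c).symm)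
  · intro a b c d
    induction a, b, c using Quotient.inductionOn₃ with | _ a b c
    induction d using Quotient.inductionOn with | _ d
    rw [mk, mk, mk, mk]
    exact Quotient.sound ⟨κ, fun i => hC2 _ _ _ _⟩

theorem exists_five_point_dist_le (h : IsCoarseMedianSpaceWith D μ) (hD : IsMetricD D) :
    ∃ C, ∀ a b c d e, D (μ a b (μ c d e)) (μ (μ a b c) (μ a b d) e) ≤ C := by
  have five_point := (h.isMedianAlgebra_boundedDistMedian hD (X × X × X × X × X)).five_point
    (Quotient.mk _ fun t => t.1) (Quotient.mk _ fun t => t.2.1) (Quotient.mk _ fun t => t.2.2.1)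
    (Quotient.mk _ fun t => t.2.2.2.1) (Quotient.mk _ fun t => t.2.2.2.2)
  obtain ⟨-, -, -, ⟨ρ, hρ, hμ⟩, -⟩ := h
  simp only [boundedDistMedian_mk hD hρ hμ] at five_point
  obtain ⟨C, hC⟩ := Quotient.exact five_point
  exact ⟨C, fun a b c d e => hC (a, b, c, d, e)⟩

theorem exists_cmInterval_subset_ball (h : IsCoarseMedianSpaceWith D μ) (hD : IsMetricD D) :
    ∃ ρ : ℝ → ℝ, Monotone ρ ∧ ∀ x y, cmInterval μ x y ⊆ {z | D x z ≤ ρ (D x y)} := by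
  have hsymm := h.isSymmMajority
  obtain ⟨-, -, -, ⟨ρ, hρ, hμ⟩, -⟩ := h
  refine ⟨ρ, hρ, fun x y => ?_⟩
  rintro _ ⟨z, rfl⟩
  have hdist := hμ x x z z x y
  rwa [hsymm.right_comm x z x, hsymm.majority, hD.self, hD.self, add_zero, zero_add] at hdist

theorem exists_cmInterval_ncard_le (h : IsCoarseMedianSpaceWith D μ) (hD : IsMetricD D)
    (hb : BoundedGeometryWith D) (C : ℝ) :
    ∃ N : ℕ, ∀ x y, D x y ≤ C → (cmInterval μ x y).Finite ∧ (cmInterval μ x y).ncard ≤ N := by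
  obtain ⟨ρ, hρ, hball⟩ := h.exists_cmInterval_subset_ball hD
  obtain ⟨N, hN⟩ := hb (max (ρ C) 1) (by positivity)
  refine ⟨N, fun x y hxy => ?_⟩
  have hsub : cmInterval μ x y ⊆ {z | D x z ≤ max (ρ C) 1} := fun z hz =>
    (hball x y hz).trans ((hρ hxy).trans (le_max_left _ _))
  exact ⟨(hN x).1.subset hsub, (Set.ncard_le_ncard hsub (hN x).1).trans (hN x).2⟩

theorem finite_cmInterval (h : IsCoarseMedianSpaceWith D μ) (hD : IsMetricD D)
    (hb : BoundedGeometryWith D) (a b : X) : (cmInterval μ a b).Finite := by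
  obtain ⟨_, hN⟩ := h.exists_cmInterval_ncard_le hD hb (D a b)
  exact (hN a b le_rfl).1

theorem exists_coarseFivePoint (h : IsCoarseMedianSpaceWith D μ) (hD : IsMetricD D)
    (hb : BoundedGeometryWith D) :
    ∃ K, CoarseFivePoint μ K := by
  obtain ⟨C, hC⟩ := h.exists_five_point_dist_le hD
  obtain ⟨K, hK⟩ := h.exists_cmInterval_ncard_le hD hb C
  exact ⟨K, fun a b c d e => (hK _ _ (hC a b c d e)).2⟩

end IsCoarseMedianSpaceWith

end CoarseMedianSpace

section ChainDist

variable {X Y : Type*} {w : X → X → ℕ} {n k : ℕ} {x y z : X}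

/-- `WeightedChain w n x y`: some chain of points from `x` to `y` has total weight `n`, where a step
from `u` to `v` weighs `w u v`. -/
inductive WeightedChain (w : X → X → ℕ) : ℕ → X → X → Prop
  | nil (x : X) : WeightedChain w 0 x x
  | snoc {n : ℕ} {x y : X} (h : WeightedChain w n x y) (z : X) :
      WeightedChain w (n + w y z) x z

namespace WeightedChain

theorem single (w : X → X → ℕ) (x y : X) : WeightedChain w (w x y) x y := by
  simpa only [zero_add] using (nil x).snoc y

theorem append (hxy : WeightedChain w n x y) (hyz : WeightedChain w k y z) :
    WeightedChain w (n + k) x z := by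
  induction hyz with
  | nil => exact hxy
  | snoc _ z ih =>
    rw [← add_assoc]
    exact (ih hxy).snoc z

theorem symm (hw : ∀ x y, w x y = w y x) (h : WeightedChain w n x y) : WeightedChain w n y x := by
  induction h with
  | nil x => exact nil x
  | @snoc n x y _ z ih =>
    rw [add_comm, hw y z]
    exact (single w z y).append ih

end WeightedChain

/-- The least weight of a chain from `x` to `y`. As weights are natural numbers and any two points
are joined by a chain, the infimum is attained. -/
noncomputable def chainDist (w : X → X → ℕ) (x y : X) : ℕ :=
  sInf {n | WeightedChain w n x y}

theorem weightedChain_chainDist (w : X → X → ℕ) (x y : X) :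
    WeightedChain w (chainDist w x y) x y :=
  Nat.sInf_mem (s := {n | WeightedChain w n x y}) ⟨_, .single w x y⟩

theorem WeightedChain.chainDist_le (h : WeightedChain w n x y) : chainDist w x y ≤ n :=
  Nat.sInf_le h

theorem chainDist_le_weight (w : X → X → ℕ) (x y : X) : chainDist w x y ≤ w x y :=
  (WeightedChain.single w x y).chainDist_le

theorem chainDist_self (w : X → X → ℕ) (x : X) : chainDist w x x = 0 :=
  Nat.le_zero.1 (WeightedChain.nil x).chainDist_le

theorem chainDist_comm (hw : ∀ x y, w x y = w y x) (x y : X) : chainDist w x y = chainDist w y x :=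
  le_antisymm ((weightedChain_chainDist w y x).symm hw).chainDist_le
    ((weightedChain_chainDist w x y).symm hw).chainDist_le

theorem chainDist_triangle (w : X → X → ℕ) (x y z : X) :
    chainDist w x z ≤ chainDist w x y + chainDist w y z :=
  ((weightedChain_chainDist w x y).append (weightedChain_chainDist w y z)).chainDist_le

theorem eq_or_exists_chainDist_add_weight_le (w : X → X → ℕ) (x y : X) :
    x = y ∨ ∃ z, chainDist w x z + w z y ≤ chainDist w x y := by
  have hchain := weightedChain_chainDist w x y
  generalize chainDist w x y = n at hchain
  cases hchain with
  | nil => exact .inl rfl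
  | snoc h => exact .inr ⟨_, Nat.add_le_add_right h.chainDist_le _⟩

theorem eq_of_chainDist_eq_zero (hw : ∀ x y, 0 < w x y) (h : chainDist w x y = 0) : x = y := by
  refine (eq_or_exists_chainDist_add_weight_le w x y).resolve_right ?_
  rintro ⟨z, hz⟩
  have := hw z y
  omega

theorem isMetricD_chainDist (hsymm : ∀ x y, w x y = w y x) (hpos : ∀ x y, 0 < w x y) :
    IsMetricD fun x y => (chainDist w x y : ℝ) where
  self x := by exact_mod_cast chainDist_self w x
  eq_of_dist_eq_zero x y h := eq_of_chainDist_eq_zero hpos (by exact_mod_cast h)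
  symm x y := by exact_mod_cast chainDist_comm hsymm x y
  triangle x y z := by exact_mod_cast chainDist_triangle w x y z

theorem chainDist_map_le {v : Y → Y → ℕ} {L : ℕ} (f : X → Y)
    (hf : ∀ x y, v (f x) (f y) ≤ L * w x y) (x y : X) :
    chainDist v (f x) (f y) ≤ L * chainDist w x y := by
  have hchain := weightedChain_chainDist w x y
  generalize chainDist w x y = n at hchain
  induction hchain with
  | nil x => exact (chainDist_self v (f x)).trans_le (Nat.zero_le _)
  | @snoc n x y _ z ih =>
    calc chainDist v (f x) (f z)
        ≤ chainDist v (f x) (f y) + chainDist v (f y) (f z) := chainDist_triangle ..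
      _ ≤ L * n + L * w y z := add_le_add ih ((chainDist_le_weight ..).trans (hf y z))
      _ = L * (n + w y z) := (mul_add ..).symm

end ChainDist

section UniformlyFiniteBalls

variable {X Y : Type*} {w : X → X → ℕ}

/-- The sets `{y | w x y ≤ R}` are finite, with cardinality bounded independently of `x`: bounded
geometry for a function `w` that need not be a metric. -/
def UniformlyFiniteBalls (w : X → X → ℕ) : Prop :=
  ∀ R : ℕ, ∃ N : ℕ, ∀ x, {y | w x y ≤ R}.encard ≤ N

theorem encard_biUnion_le_mul {S : Set X} (hS : S.Finite) {T : X → Set Y} {N : ℕ∞}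
    (hT : ∀ s ∈ S, (T s).encard ≤ N) : (⋃ s ∈ S, T s).encard ≤ S.encard * N := by
  induction S, hS using Set.Finite.induction_on with
  | empty => simp only [Set.mem_empty_iff_false, Set.iUnion_of_empty, Set.iUnion_empty,
      Set.encard_empty, zero_mul, le_refl]
  | @insert a S ha _ ih =>
    rw [Set.biUnion_insert, Set.encard_insert_of_notMem ha, add_mul, one_mul, add_comm]
    exact (Set.encard_union_le _ _).trans
      (add_le_add (hT a (S.mem_insert a)) (ih fun s hs => hT s (S.mem_insert_of_mem a hs)))

theorem uniformlyFiniteBalls_chainDist (hpos : ∀ x y, 0 < w x y) (hw : UniformlyFiniteBalls w) :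
    UniformlyFiniteBalls (chainDist w) := by
  intro R
  induction R with
  | zero =>
    refine ⟨1, fun x => ?_⟩
    have hsub : {y | chainDist w x y ≤ 0} ⊆ {x} := fun y hy =>
      (eq_of_chainDist_eq_zero hpos (Nat.le_zero.1 hy)).symm
    exact (Set.encard_le_encard hsub).trans (Set.encard_singleton x).le
  | succ R ih =>
    obtain ⟨N, hN⟩ := ih
    obtain ⟨M, hM⟩ := hw (R + 1)
    refine ⟨1 + N * M, fun x => ?_⟩
    have hsub : {y | chainDist w x y ≤ R + 1} ⊆
        {x} ∪ ⋃ z ∈ {z | chainDist w x z ≤ R}, {y | w z y ≤ R + 1} := by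
      intro y (hy : chainDist w x y ≤ R + 1)
      obtain rfl | ⟨z, hz⟩ := eq_or_exists_chainDist_add_weight_le w x y
      · exact .inl rfl
      · have := hpos z y
        exact .inr (Set.mem_biUnion (x := z) (show chainDist w x z ≤ R by omega)
          (show w z y ≤ R + 1 by omega))
    have hfinite := Set.finite_of_encard_le_coe (hN x)
    calc {y | chainDist w x y ≤ R + 1}.encard
        ≤ ({x} : Set X).encard + (⋃ z ∈ {z | chainDist w x z ≤ R}, {y | w z y ≤ R + 1}).encard :=
          (Set.encard_le_encard hsub).trans (Set.encard_union_le _ _)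
      _ ≤ 1 + {z | chainDist w x z ≤ R}.encard * M :=
          add_le_add (Set.encard_singleton x).le (encard_biUnion_le_mul hfinite fun z _ => hM z)
      _ ≤ 1 + N * M := by gcongr; exact hN x
      _ = (1 + N * M : ℕ) := by push_cast; rfl

theorem UniformlyFiniteBalls.boundedGeometryWith (hw : UniformlyFiniteBalls w) :
    BoundedGeometryWith fun x y => (w x y : ℝ) := by
  intro r hr
  obtain ⟨N, hN⟩ := hw ⌊r⌋₊
  refine ⟨N, fun x => ?_⟩
  simp only [← Nat.le_floor_iff hr.le]
  exact Set.encard_le_coe_iff_finite_ncard_le.1 (hN x)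

end UniformlyFiniteBalls

section CoarseMedianAlgebra

variable {X : Type*} {μ : X → X → X → X}

theorem IsSymmMajority.cmInterval_comm (h : IsSymmMajority μ) (a b : X) :
    cmInterval μ a b = cmInterval μ b a := by
  ext c
  exact exists_congr fun x => by rw [h.rotate a, h.left_comm x]

theorem ncard_cmInterval_pos (hfin : ∀ a b, (cmInterval μ a b).Finite) (a b : X) :
    0 < (cmInterval μ a b).ncard :=
  (Set.ncard_pos (hfin a b)).2 ⟨_, a, rfl⟩

theorem BoundedValency.uniformlyFiniteBalls (hbv : BoundedValency μ)
    (hfin : ∀ a b, (cmInterval μ a b).Finite) :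
    UniformlyFiniteBalls fun x y => (cmInterval μ x y).ncard := by
  intro R
  obtain ⟨φ, hφ⟩ := hbv
  refine ⟨φ R, fun x => Set.encard_le_coe_iff_finite_ncard_le.2 ?_⟩
  simpa only [hfin, true_and] using hφ x R

/-- The chain metric in which a step from `x` to `y` costs the cardinality of `[x,y]`. -/
noncomputable def intervalDist (μ : X → X → X → X) : X → X → ℕ :=
  chainDist fun x y => (cmInterval μ x y).ncard

theorem IsSymmMajority.ncard_cmInterval_median_le {K N : ℕ} (h : IsSymmMajority μ)
    (hfin : ∀ a b, (cmInterval μ a b).Finite) (hK : CoarseFivePoint μ K)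
    (hN : ∀ x, {y | (cmInterval μ x y).ncard ≤ K}.encard ≤ N) (a b x y : X) :
    (cmInterval μ (μ a b x) (μ a b y)).ncard ≤ N * (cmInterval μ x y).ncard := by
  have hsub : cmInterval μ (μ a b x) (μ a b y) ⊆
      ⋃ s ∈ cmInterval μ x y, {z | (cmInterval μ (μ a b s) z).ncard ≤ K} := by
    rintro _ ⟨t, rfl⟩
    rw [h.right_comm _ t]
    exact Set.mem_biUnion (x := μ x y t) ⟨t, h.right_comm _ _ _⟩ (hK a b x y t)
  have hcard := (Set.encard_le_encard hsub).trans (encard_biUnion_le_mul (hfin x y) fun s _ => hN _)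
  rw [← (hfin _ _).cast_ncard_eq, ← (hfin x y).cast_ncard_eq, mul_comm] at hcard
  exact_mod_cast hcard

theorem IsSymmMajority.intervalDist_median_le {L : ℕ} (h : IsSymmMajority μ)
    (hL : ∀ a b x y, intervalDist μ (μ a b x) (μ a b y) ≤ L * intervalDist μ x y)
    (a a' b b' c c' : X) :
    intervalDist μ (μ a b c) (μ a' b' c') ≤
      L * (intervalDist μ a a' + intervalDist μ b b' + intervalDist μ c c') := by
  have ha : intervalDist μ (μ a b c) (μ a' b c) ≤ L * intervalDist μ a a' := by
    rw [h.rotate a, h.rotate a']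
    exact hL b c a a'
  have hb : intervalDist μ (μ a' b c) (μ a' b' c) ≤ L * intervalDist μ b b' := by
    rw [h.right_comm a' b, h.right_comm a' b']
    exact hL a' c b b'
  have hc : intervalDist μ (μ a' b' c) (μ a' b' c') ≤ L * intervalDist μ c c' := hL a' b' c c'
  calc intervalDist μ (μ a b c) (μ a' b' c')
      ≤ intervalDist μ (μ a b c) (μ a' b c) + intervalDist μ (μ a' b c) (μ a' b' c') :=
        chainDist_triangle ..
    _ ≤ intervalDist μ (μ a b c) (μ a' b c) + (intervalDist μ (μ a' b c) (μ a' b' c) +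
          intervalDist μ (μ a' b' c) (μ a' b' c')) :=
        Nat.add_le_add_left (chainDist_triangle ..) _
    _ ≤ L * (intervalDist μ a a' + intervalDist μ b b' + intervalDist μ c c') := by
        rw [mul_add, mul_add, add_assoc]
        exact add_le_add ha (add_le_add hb hc)

theorem IsSymmMajority.intervalDist_four_point_le {K : ℕ} (h : IsSymmMajority μ)
    (hK : CoarseFivePoint μ K) (a b c d : X) :
    intervalDist μ (μ (μ a b c) b d) (μ a b (μ c b d)) ≤ K := by
  have hle := hK a b c b d
  rw [h.majority_right, h.cmInterval_comm] at hle
  exact (chainDist_le_weight ..).trans hle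

theorem IsSymmMajority.isCoarseMedianSpaceWith_intervalDist {K : ℕ} (h : IsSymmMajority μ)
    (hbv : BoundedValency μ) (hfin : ∀ a b, (cmInterval μ a b).Finite)
    (hK : CoarseFivePoint μ K) :
    IsCoarseMedianSpaceWith (fun x y => (intervalDist μ x y : ℝ)) μ := by
  obtain ⟨N, hN⟩ := hbv.uniformlyFiniteBalls hfin K
  have lipschitz (a b x y : X) : intervalDist μ (μ a b x) (μ a b y) ≤ N * intervalDist μ x y :=
    chainDist_map_le (μ a b) (h.ncard_cmInterval_median_le hfin hK hN a b) x y
  refine ⟨h.majority, h.right_comm, h.left_comm, ⟨fun t => N * t, ?_, fun a a' b b' c c' => ?_⟩,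
    K, Nat.cast_nonneg K, fun a b c d => ?_⟩
  · exact monotone_id.const_mul (Nat.cast_nonneg N)
  · beta_reduce
    exact_mod_cast h.intervalDist_median_le lipschitz a a' b b' c c'
  · beta_reduce
    exact_mod_cast h.intervalDist_four_point_le hK a b c d

end CoarseMedianAlgebra

/-- a bounded valency ternary algebra admits a metric making it a
bounded geometry coarse median space if and only if it is a coarse median
algebra (finite intervals, (M1), (M2) and the coarse five-point condition
(M3)'). -/
theorem stmt17 {X : Type*} (μ : X → X → X → X) (hbv : BoundedValency μ) :
    (∃ D : X → X → ℝ, IsMetricD D ∧ BoundedGeometryWith D ∧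
      IsCoarseMedianSpaceWith D μ) ↔
    ((∀ a b : X, (cmInterval μ a b).Finite) ∧
     (∀ a b : X, μ a a b = a) ∧
     (∀ a b c : X, μ a b c = μ a c b) ∧
     (∀ a b c : X, μ a b c = μ b a c) ∧
     (∃ K : ℕ, ∀ a b c d e : X,
       (cmInterval μ (μ a b (μ c d e)) (μ (μ a b c) (μ a b d) e)).ncard ≤ K)) := by
  constructor
  · rintro ⟨D, hD, hb, hm⟩
    exact ⟨hm.finite_cmInterval hD hb, hm.1, hm.2.1, hm.2.2.1, hm.exists_coarseFivePoint hD hb⟩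
  · rintro ⟨hfin, hM1, hM2, hM2', K, hK⟩
    have h : IsSymmMajority μ := ⟨hM1, hM2, hM2'⟩
    have hpos := ncard_cmInterval_pos hfin
    refine ⟨fun x y => intervalDist μ x y, ?_, ?_, ?_⟩
    · exact isMetricD_chainDist (fun x y => congrArg Set.ncard (h.cmInterval_comm x y)) hpos
    · exact (uniformlyFiniteBalls_chainDist hpos
        (hbv.uniformlyFiniteBalls hfin)).boundedGeometryWith
    · exact h.isCoarseMedianSpaceWith_intervalDist hbv hfin hK
end
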